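/- Let X and Y be ∞-pseudo-metric spaces and r > 0. Suppose 𝒜 is a subspace array in X indexed by S that is scale-r-disjoint and of scale-r-dimension 0 (there is a single finite M bounding the diameters of all scale-r-components of all entries 𝒜(s)), and ℬ is a subspace array in Y indexed by S of scale-r-dimension 0 (a single finite bound for all entries). Then the subset 𝒜 ·× ℬ = ⋃_{s∈S} 𝒜(s) × ℬ(s) of X × Y with the supremum ∞-pseudo-metric is of scale-r-dimension 0. -/

import Mathlib

open Set
open scoped ENNReal

/-- `y` is joined to `x` by a scale-`r`-chain in `A`: a finite sequence of points of `A`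
starting at `x` and ending at `y`, consecutive points of which have intersecting open
`r`-balls. -/
def ScaleChain {X : Type*} [PseudoEMetricSpace X] (r : ℝ) (A : Set X) (x y : X) : Prop :=
  ∃ n : ℕ, ∃ c : ℕ → X, (∀ i ≤ n, c i ∈ A) ∧ c 0 = x ∧ c n = y ∧
    ∀ i < n,
      (EMetric.ball (c i) (ENNReal.ofReal r) ∩
        EMetric.ball (c (i + 1)) (ENNReal.ofReal r)).Nonempty

/-- The scale-`r`-component of `x` in `A`: all points of `A` joined to `x` by a
scale-`r`-chain in `A`. -/
def ScaleComponent {X : Type*} [PseudoEMetricSpace X] (r : ℝ) (A : Set X) (x : X) : Set X :=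
  {y | ScaleChain r A x y}

/-- `A` has scale-`r`-dimension `0`: there is a finite bound on the diameters of all
scale-`r`-components of `A`. -/
def ScaleDimZero {X : Type*} [PseudoEMetricSpace X] (r : ℝ) (A : Set X) : Prop :=
  ∃ M : ℝ≥0∞, M ≠ ⊤ ∧ ∀ x ∈ A, EMetric.diam (ScaleComponent r A x) ≤ M

/-!
A point within `r` of two members of a scale-`r`-disjoint array would lie in both of their
`r`-neighborhoods, so a scale-`r`-chain in the union of such an array never leaves the member it
starts in: passing to the union creates no new components. The blocks `A s ×ˢ B s` inherit
disjointness from the `A s`, because the first projection is `1`-Lipschitz. Within one block both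
projections carry chains to chains, so a component of `A s ×ˢ B s` lies in a product of components
of `A s` and `B s`, whose diameter is controlled by the supremum metric.
-/

section Defs

variable {X S : Type*} [PseudoEMetricSpace X]

/-- The array `A` is scale-`r`-disjoint: the open `r`-neighborhoods of its members are pairwise
disjoint. -/
def ScaleDisjoint (r : ℝ) (A : S → Set X) : Prop :=
  Pairwise fun s t => Disjoint (Metric.thickening r (A s)) (Metric.thickening r (A t))

/-- The array `A` is of scale-`r`-dimension `0`: one finite bound on the diameters of the
scale-`r`-components serves all its members. -/
def UniformScaleDimZero (r : ℝ) (A : S → Set X) : Prop :=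
  ∃ M : ℝ≥0∞, M ≠ ⊤ ∧ ∀ s, ∀ x ∈ A s, Metric.ediam (ScaleComponent r (A s) x) ≤ M

end Defs

section Lipschitz

variable {X Y S : Type*} [PseudoEMetricSpace X] [PseudoEMetricSpace Y] {r : ℝ} {f : X → Y}

theorem ScaleChain.map {A : Set X} {B : Set Y} {x y : X} (h : ScaleChain r A x y)
    (hf : LipschitzWith 1 f) (hAB : MapsTo f A B) : ScaleChain r B (f x) (f y) := by
  obtain ⟨n, c, hcA, rfl, rfl, hstep⟩ := h
  refine ⟨n, f ∘ c, fun i hi => hAB (hcA i hi), rfl, rfl, fun i hi => ?_⟩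
  have hball (a : X) : MapsTo f (Metric.eball a (ENNReal.ofReal r))
      (Metric.eball (f a) (ENNReal.ofReal r)) := by
    simpa only [ENNReal.coe_one, one_mul] using hf.mapsTo_eball one_ne_zero a (ENNReal.ofReal r)
  exact ((hstep i hi).image f).mono ((hball _).inter_inter (hball _)).image_subset

theorem mapsTo_thickening_of_lipschitzWith_one {A : Set X} {B : Set Y} (hf : LipschitzWith 1 f)
    (hAB : MapsTo f A B) : MapsTo f (Metric.thickening r A) (Metric.thickening r B) := by
  intro x hx
  obtain ⟨a, ha, hxa⟩ := (Metric.mem_thickening_iff_exists_edist_lt _ _).1 hx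
  refine (Metric.mem_thickening_iff_exists_edist_lt _ _).2 ⟨f a, hAB ha, ?_⟩
  simpa only [ENNReal.coe_one, one_mul] using hf.edist_lt_mul_of_lt one_ne_zero hxa

theorem ScaleDisjoint.of_mapsTo {A : S → Set X} {B : S → Set Y} (hB : ScaleDisjoint r B)
    (hf : LipschitzWith 1 f) (hAB : ∀ s, MapsTo f (A s) (B s)) : ScaleDisjoint r A :=
  fun s t hst => ((hB hst).preimage f).mono
    (mapsTo_thickening_of_lipschitzWith_one hf (hAB s)).subset_preimage
    (mapsTo_thickening_of_lipschitzWith_one hf (hAB t)).subset_preimage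

end Lipschitz

section Union

variable {X S : Type*} [PseudoEMetricSpace X] {r : ℝ} {A : S → Set X}

theorem ScaleDisjoint.eq_of_nonempty_eball_inter (hA : ScaleDisjoint r A) {s t : S} {x y : X}
    (hx : x ∈ A s) (hy : y ∈ A t)
    (hxy : (Metric.eball x (ENNReal.ofReal r) ∩ Metric.eball y (ENNReal.ofReal r)).Nonempty) :
    s = t := by
  obtain ⟨z, hzx, hzy⟩ := hxy
  by_contra hst
  exact (hA hst).notMem_of_mem_left
    ((Metric.mem_thickening_iff_exists_edist_lt _ _).2 ⟨x, hx, hzx⟩)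
    ((Metric.mem_thickening_iff_exists_edist_lt _ _).2 ⟨y, hy, hzy⟩)

theorem ScaleDisjoint.scaleChain_of_iUnion (hA : ScaleDisjoint r A) {s : S} {x y : X}
    (hx : x ∈ A s) (h : ScaleChain r (⋃ t, A t) x y) : ScaleChain r (A s) x y := by
  obtain ⟨n, c, hc, rfl, rfl, hstep⟩ := h
  refine ⟨n, c, fun i => ?_, rfl, rfl, hstep⟩
  induction i with
  | zero => exact fun _ => hx
  | succ i ih =>
    intro hi
    obtain ⟨t, ht⟩ := mem_iUnion.1 (hc (i + 1) hi)
    obtain rfl : s = t := hA.eq_of_nonempty_eball_inter (ih (Nat.le_of_succ_le hi)) ht (hstep i hi)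
    exact ht

theorem UniformScaleDimZero.iUnion (hdim : UniformScaleDimZero r A) (hdisj : ScaleDisjoint r A) :
    ScaleDimZero r (⋃ s, A s) := by
  obtain ⟨M, hM, hdiam⟩ := hdim
  refine ⟨M, hM, fun x hx => ?_⟩
  obtain ⟨s, hs⟩ := mem_iUnion.1 hx
  have hsub : ScaleComponent r (⋃ s, A s) x ⊆ ScaleComponent r (A s) x :=
    fun _ => hdisj.scaleChain_of_iUnion hs
  exact (Metric.ediam_mono hsub).trans (hdiam s x hs)

end Union

section Prod

variable {X Y S : Type*} [PseudoEMetricSpace X] [PseudoEMetricSpace Y] {r : ℝ}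

theorem ediam_prod_le (s : Set X) (t : Set Y) :
    Metric.ediam (s ×ˢ t) ≤ max (Metric.ediam s) (Metric.ediam t) :=
  Metric.ediam_le fun _ hp _ hq => max_le_max
    (Metric.edist_le_ediam_of_mem hp.1 hq.1) (Metric.edist_le_ediam_of_mem hp.2 hq.2)

theorem scaleComponent_prod_subset (A : Set X) (B : Set Y) (p : X × Y) :
    ScaleComponent r (A ×ˢ B) p ⊆ ScaleComponent r A p.1 ×ˢ ScaleComponent r B p.2 :=
  fun _ h => ⟨h.map LipschitzWith.prod_fst fun _ => And.left,
    h.map LipschitzWith.prod_snd fun _ => And.right⟩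

theorem UniformScaleDimZero.prod {A : S → Set X} {B : S → Set Y} (hA : UniformScaleDimZero r A)
    (hB : UniformScaleDimZero r B) : UniformScaleDimZero r fun s => A s ×ˢ B s := by
  obtain ⟨M, hM, hA⟩ := hA
  obtain ⟨N, hN, hB⟩ := hB
  refine ⟨max M N, max_ne_top hM hN, fun s p hp => ?_⟩
  calc Metric.ediam (ScaleComponent r (A s ×ˢ B s) p)
      ≤ Metric.ediam (ScaleComponent r (A s) p.1 ×ˢ ScaleComponent r (B s) p.2) :=
        Metric.ediam_mono (scaleComponent_prod_subset _ _ _)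
    _ ≤ max (Metric.ediam (ScaleComponent r (A s) p.1))
          (Metric.ediam (ScaleComponent r (B s) p.2)) := ediam_prod_le _ _
    _ ≤ max M N := max_le_max (hA s _ hp.1) (hB s _ hp.2)

theorem ScaleDisjoint.prod_left {A : S → Set X} (hA : ScaleDisjoint r A) (B : S → Set Y) :
    ScaleDisjoint r fun s => A s ×ˢ B s :=
  hA.of_mapsTo LipschitzWith.prod_fst fun _ _ => And.left

end Prod

/-- Let `X` and `Y` be `∞`-pseudo-metric spaces and `r > 0`. Suppose `A` is a subspace array
in `X` indexed by `S` that is scale-`r`-disjoint and of scale-`r`-dimension `0` (a single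
finite `M` bounds the diameters of all scale-`r`-components of all the entries `A s`), and
`B` is a subspace array in `Y` indexed by `S` of scale-`r`-dimension `0` (again with a single
finite bound for all entries). Then the subset `A ·× B = ⋃ s, A s ×ˢ B s` of `X × Y` with the
supremum `∞`-pseudo-metric is of scale-`r`-dimension `0`. -/
theorem scaleDimZero_timesDotProd {X Y S : Type*} [PseudoEMetricSpace X] [PseudoEMetricSpace Y]
    (r : ℝ) (hr : 0 < r) (A : S → Set X) (B : S → Set Y)
    (hdisj : ∀ s s' : S, s ≠ s' →
      Metric.thickening r (A s) ∩ Metric.thickening r (A s') = ∅)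
    (hA : ∃ M : ℝ≥0∞, M ≠ ⊤ ∧ ∀ s : S, ∀ x ∈ A s, EMetric.diam (ScaleComponent r (A s) x) ≤ M)
    (hB : ∃ N : ℝ≥0∞, N ≠ ⊤ ∧ ∀ s : S, ∀ y ∈ B s, EMetric.diam (ScaleComponent r (B s) y) ≤ N) :
    ScaleDimZero r (⋃ s : S, A s ×ˢ B s) := by
  have hA_disj : ScaleDisjoint r A := fun s t hst => disjoint_iff_inter_eq_empty.2 (hdisj s t hst)
  have hblocks : UniformScaleDimZero r fun s => A s ×ˢ B s := UniformScaleDimZero.prod hA hB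
  exact hblocks.iUnion (hA_disj.prod_left B)
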